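/- Let N ≥ 1 and let σ be the step sequence of a Dyck path of length 2N with a slope at j (σ(j)=σ(j+1)), for some j ∈ {1,…,2N−1}. Then the function F = U_{σ/×_j} of the variables (x_1,…,x_{j−1},ξ,x_{j+2},…,x_{2N}) satisfies, at every point of the chamber x_1<⋯<x_{j−1}<ξ<x_{j+2}<⋯<x_{2N}, the third-order PDE (κ=4): ∂³F/∂ξ³ − 4 Σ_{i∉{j,j+1}} ( (1/4)·(∂F/∂ξ)/(x_i−ξ)² − (∂²F/∂x_i∂ξ)/(x_i−ξ) ) + 2 Σ_{i∉{j,j+1}} ( (1/2)·F/(x_i−ξ)³ − (∂F/∂x_i)/(x_i−ξ)² ) = 0. -/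

import Mathlib

/-!
Write `ξ` for coordinate `j`, `T` for the remaining live indices, `s i = σ i * σ j`, and
`u i = (x i - ξ)⁻¹`. On the chamber `F = exp Φ` with
`Φ = ∑_{t<s} (σ t σ s / 2) log (x s - x t) + ∑_i s i log |x i - ξ|`. With the power sums
`P m = ∑ i ∈ T, s i * u i ^ m` and `G i = ∂_i Φ`, this gives

* `∂_ξ F = - F P₁`, `∂_ξ³ F = F (- P₁³ + 3 P₁ P₂ - 2 P₃)`,
* `∂_i F = F G i`, `∂_i ∂_ξ F = F (- G i P₁ + s i u i ²)`.

Since `(u k ^ m - u i ^ m) / (x k - x i)` equals `- u i u k` for `m = 1` and `- u i u k (u i + u k)`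
for `m = 2`, the sums `∑ u i ^ m G i` symmetrise into (`fuseGrad_one`, `fuseGrad_two`)

* `∑ u i G i = P₂ - (P₁² - ∑ u i ²) / 4`,
* `∑ u i ² G i = P₃ - (P₁ P₂ - ∑ u i ³) / 2`,

where `s i ² = 1` is used. Substituting, all terms cancel identically.
-/

open Filter Finset
open scoped BigOperators Classical Topology

noncomputable section

/-- The open chamber `x 0 < x 1 < ⋯ < x (n-1)`. -/
def chamber (n : ℕ) : Set (Fin n → ℝ) := {x | ∀ i j : Fin n, i < j → x i < x j}

/-- Planar pair partitions of `{0, …, 2N-1}` (i.e. of `{1,…,2N}` in 1-based labelling),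
encoded as noncrossing fixed-point-free involutions: the links are the pairs `{i, f i}`. -/
def PlanarPair (N : ℕ) : Type :=
  {f : Fin (2 * N) → Fin (2 * N) //
    (∀ i, f (f i) = i) ∧ (∀ i, f i ≠ i) ∧
      ∀ i j, i < j → j < f i → i < f j ∧ f j < f i}

instance (N : ℕ) : Fintype (PlanarPair N) := by
  unfold PlanarPair; infer_instance

/-- The Dyck step sequence of a planar pair partition: `+1` at openers, `-1` at closers. -/
def pairSign {N : ℕ} (α : PlanarPair N) (i : Fin (2 * N)) : ℝ :=
  if i < α.val i then 1 else -1

/-- The conformal block of a sign sequence: `∏_{i<j} (x_j - x_i)^{σ_i σ_j / 2}`. -/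
def cblock {n : ℕ} (σ : Fin n → ℝ) (x : Fin n → ℝ) : ℝ :=
  ∏ p ∈ univ.filter (fun p : Fin n × Fin n => p.1 < p.2),
    (x p.2 - x p.1) ^ (σ p.1 * σ p.2 / 2)

/-- `σ` is the step sequence of a Dyck path. -/
def IsDyck {n : ℕ} (σ : Fin n → ℝ) : Prop :=
  (∀ i, σ i = 1 ∨ σ i = -1) ∧
    (∀ k : Fin n, 0 ≤ ∑ i ∈ univ.filter (fun i : Fin n => i ≤ k), σ i) ∧
    ∑ i, σ i = 0

/-- The relation `α ⟵ β`: every link of `β` joins an opener of `α` to a closer of `α`. -/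
def kwRel {N : ℕ} (α β : PlanarPair N) : Prop :=
  ∀ i, (i < α.val i) ↔ ¬ β.val i < α.val (β.val i)

/-- The incidence matrix `M` of the relation `⟵`. -/
def Mmat (N : ℕ) : Matrix (PlanarPair N) (PlanarPair N) ℝ :=
  fun α β => if kwRel α β then 1 else 0

/-- The κ = 4 pure partition functions `Z_α = Σ_β (M⁻¹)_{α,β} U_β`. -/
def pureZ {N : ℕ} (α : PlanarPair N) (x : Fin (2 * N) → ℝ) : ℝ :=
  ∑ β : PlanarPair N, (Mmat N)⁻¹ α β * cblock (pairSign β) x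

/-- Partial derivative in the `i`-th coordinate. -/
def pd {n : ℕ} (i : Fin n) (f : (Fin n → ℝ) → ℝ) : (Fin n → ℝ) → ℝ :=
  fun x => fderiv ℝ f x (Pi.single i 1)

/-- Doubling a configuration point: the limit point of total fusion. -/
def dup {N : ℕ} (y : Fin (2 * N) → ℝ) : Fin (2 * (2 * N)) → ℝ :=
  fun i => y ⟨i.val / 2, by have := i.2; omega⟩

/-- The fusion normalization `∏_j (x_{2j} - x_{2j-1})^{1/2}`. -/
def fuseDenom {N : ℕ} (x : Fin (2 * (2 * N)) → ℝ) : ℝ :=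
  ∏ j : Fin (2 * N),
    (x ⟨2 * j.val + 1, by have := j.2; omega⟩ - x ⟨2 * j.val, by have := j.2; omega⟩) ^
      ((1 : ℝ) / 2)

/-- `α` contains no link of the form `{2j-1, 2j}` (1-based). -/
def noFuseLink {N : ℕ} (α : PlanarPair (2 * N)) : Prop :=
  ∀ j : Fin (2 * N),
    α.val ⟨2 * j.val, by have := j.2; omega⟩ ≠ ⟨2 * j.val + 1, by have := j.2; omega⟩

/-- The fused pure partition function `Ẑ_α`, defined as the fusion limit. -/
def fusedZ {N : ℕ} (α : PlanarPair (2 * N)) (y : Fin (2 * N) → ℝ) : ℝ :=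
  limUnder (𝓝[chamber (2 * (2 * N))] dup y) fun x => pureZ α x / fuseDenom x

/-- The single-fusion of a conformal block with a slope at `j` (0-based `j`, `j+1`);
the fused point `ξ` sits at coordinate `j`, and coordinate `j+1` is ignored. -/
def Ufuse {n : ℕ} (σ : Fin n → ℝ) (j : ℕ) (hj : j + 1 < n) (x : Fin n → ℝ) : ℝ :=
  (∏ p ∈ univ.filter (fun p : Fin n × Fin n =>
      p.1 < p.2 ∧ p.1.val ≠ j ∧ p.1.val ≠ j + 1 ∧ p.2.val ≠ j ∧ p.2.val ≠ j + 1),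
    (x p.2 - x p.1) ^ (σ p.1 * σ p.2 / 2)) *
  ∏ i ∈ univ.filter (fun i : Fin n => i.val ≠ j ∧ i.val ≠ j + 1),
    |x i - x ⟨j, by omega⟩| ^ (σ i * σ ⟨j, by omega⟩)

/-- The single-fusion `V_{σ/∨_j}` of a conformal block with a local minimum at `j`. -/
def Vfuse {n : ℕ} (σ : Fin n → ℝ) (j : ℕ) (hj : j + 1 < n) (x : Fin n → ℝ) : ℝ :=
  (∏ p ∈ univ.filter (fun p : Fin n × Fin n =>
      p.1 < p.2 ∧ p.1.val ≠ j ∧ p.1.val ≠ j + 1 ∧ p.2.val ≠ j ∧ p.2.val ≠ j + 1),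
    (x p.2 - x p.1) ^ (σ p.1 * σ p.2 / 2)) *
  ∑ i ∈ univ.filter (fun i : Fin n => i.val ≠ j ∧ i.val ≠ j + 1),
    σ i * σ ⟨j, by omega⟩ / (x i - x ⟨j, by omega⟩)

/-- The single-fusion `Z_{α/⨿_j}` of a pure partition function. -/
def Zfuse {N : ℕ} (α : PlanarPair N) (j : ℕ) (hj : j + 1 < 2 * N) (x : Fin (2 * N) → ℝ) : ℝ :=
  (∑ β ∈ univ.filter (fun β : PlanarPair N =>
      pairSign β ⟨j, by omega⟩ = -1 ∧ pairSign β ⟨j + 1, hj⟩ = 1),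
    (Mmat N)⁻¹ α β * Vfuse (pairSign β) j hj x) +
  ∑ β ∈ univ.filter (fun β : PlanarPair N =>
      pairSign β ⟨j, by omega⟩ = pairSign β ⟨j + 1, hj⟩),
    (Mmat N)⁻¹ α β * Ufuse (pairSign β) j hj x

/-- The chamber `x_1 < ⋯ < x_{j-1} < ξ < x_{j+2} < ⋯` for single fusion at `j`:
coordinate `j` carries `ξ` and coordinate `j+1` is ignored. -/
def fusedChamber (n j : ℕ) : Set (Fin n → ℝ) :=
  {x | ∀ k l : Fin n, k < l → k.val ≠ j + 1 → l.val ≠ j + 1 → x k < x l}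

/-- Successor inside `Fin n` (identity at the top). -/
def fsucc {n : ℕ} (e : Fin n) : Fin n := if h : e.val + 1 < n then ⟨e.val + 1, h⟩ else e

/-- The set `J_n^m` of permutations from the fusion combinatorics. -/
def Jset (n m : ℕ) : Finset (Equiv.Perm (Fin n)) :=
  univ.filter fun σ =>
    (∀ k l : Fin n, k.val % 2 = 0 → l.val % 2 = 0 → k.val < l.val → l.val < 2 * m →
      σ k < σ l) ∧
    (∀ k : Fin n, k.val % 2 = 0 → k.val < 2 * m → σ k < σ (fsucc k)) ∧
    ∀ k l : Fin n, 2 * m ≤ k.val → k.val < l.val → σ k < σ l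


section FusePDE

variable {n : ℕ}

/-! ### The logarithm of the fused block -/

/-- The indices other than `j` and `j + 1`. -/
def liveIdx (n j : ℕ) : Finset (Fin n) :=
  univ.filter (fun i : Fin n => i.val ≠ j ∧ i.val ≠ j + 1)

/-- The pairs `(t, s)` of live indices with `t < s`. -/
def livePairs (n j : ℕ) : Finset (Fin n × Fin n) :=
  univ.filter (fun p : Fin n × Fin n =>
      p.1 < p.2 ∧ p.1.val ≠ j ∧ p.1.val ≠ j + 1 ∧ p.2.val ≠ j ∧ p.2.val ≠ j + 1)

/-- The differential of `x ↦ x k - x l`. -/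
def diffCLM (k l : Fin n) : (Fin n → ℝ) →L[ℝ] ℝ :=
  ContinuousLinearMap.proj (R := ℝ) (φ := fun _ : Fin n => ℝ) k -
    ContinuousLinearMap.proj (R := ℝ) (φ := fun _ : Fin n => ℝ) l

lemma diffCLM_single (k l i : Fin n) :
    diffCLM k l (Pi.single i 1) = (if k = i then 1 else 0) - (if l = i then 1 else 0) := by
  simp [diffCLM, Pi.single_apply]

lemma hasFDerivAt_diff (k l : Fin n) (x : Fin n → ℝ) :
    HasFDerivAt (fun y : Fin n → ℝ => y k - y l) (diffCLM k l) x :=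
  (diffCLM k l).hasFDerivAt

/-- The logarithm of `Ufuse` on the chamber; `Real.log` is even, which accounts for the absolute
values in `Ufuse`. -/
def fuseLog (σ : Fin n → ℝ) (J : Fin n) (x : Fin n → ℝ) : ℝ :=
  ∑ p ∈ livePairs n J, (σ p.1 * σ p.2 / 2) * Real.log (x p.2 - x p.1) +
    ∑ i ∈ liveIdx n J, (σ i * σ J) * Real.log (x i - x J)

/-- The differential of `fuseLog`. -/
def fuseLogD (σ : Fin n → ℝ) (J : Fin n) (x : Fin n → ℝ) : (Fin n → ℝ) →L[ℝ] ℝ :=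
  ∑ p ∈ livePairs n J, (σ p.1 * σ p.2 / 2) • ((x p.2 - x p.1)⁻¹ • diffCLM p.2 p.1) +
    ∑ i ∈ liveIdx n J, (σ i * σ J) • ((x i - x J)⁻¹ • diffCLM i J)

/-- The power sum `∑ i, σ i σ J / (x i - x J) ^ m` over live indices. -/
def fusePow (σ : Fin n → ℝ) (J : Fin n) (m : ℕ) (x : Fin n → ℝ) : ℝ :=
  ∑ i ∈ liveIdx n J, (σ i * σ J) * ((x i - x J)⁻¹) ^ m

/-! ### Derivatives on the chamber -/

lemma isOpen_fusedChamber (n j : ℕ) : IsOpen (fusedChamber n j) := by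
  have : fusedChamber n j = ⋂ k : Fin n, ⋂ l : Fin n,
      {x | k < l → k.val ≠ j + 1 → l.val ≠ j + 1 → x k < x l} := by
    ext x; simp [fusedChamber]
  rw [this]
  refine isOpen_iInter_of_finite fun k => isOpen_iInter_of_finite fun l => ?_
  by_cases h : k < l ∧ k.val ≠ j + 1 ∧ l.val ≠ j + 1
  · simpa [h.1, h.2.1, h.2.2] using
      isOpen_lt (continuous_apply (A := fun _ : Fin n => ℝ) k) (continuous_apply l)
  · have : {x : Fin n → ℝ | k < l → k.val ≠ j + 1 → l.val ≠ j + 1 → x k < x l} = Set.univ := by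
      ext x; simp only [Set.mem_ofPred_eq, Set.mem_univ, iff_true]
      intro a b c; exact absurd ⟨a, b, c⟩ h
    rw [this]; exact isOpen_univ

lemma livePairs_pos {J : Fin n} {x : Fin n → ℝ} (hx : x ∈ fusedChamber n J)
    {p : Fin n × Fin n} (hp : p ∈ livePairs n J) : 0 < x p.2 - x p.1 := by
  simp only [livePairs, mem_filter, mem_univ, true_and] at hp
  exact sub_pos.2 (hx _ _ hp.1 hp.2.2.1 hp.2.2.2.2)

lemma liveIdx_ne {J : Fin n} {x : Fin n → ℝ} (hx : x ∈ fusedChamber n J)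
    {i : Fin n} (hi : i ∈ liveIdx n J) : x i - x J ≠ 0 := by
  simp only [liveIdx, mem_filter, mem_univ, true_and] at hi
  rcases lt_or_gt_of_ne hi.1 with h | h
  · exact (sub_neg.2 (hx i J h hi.2 (by omega))).ne
  · exact (sub_pos.2 (hx J i h (by omega) hi.2)).ne'

lemma Ufuse_eq_exp (σ : Fin n → ℝ) (J : Fin n) (hj : J.val + 1 < n) {x : Fin n → ℝ}
    (hx : x ∈ fusedChamber n J) : Ufuse σ J.val hj x = Real.exp (fuseLog σ J x) := by
  rw [fuseLog, Real.exp_add, Real.exp_sum, Real.exp_sum]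
  unfold Ufuse
  congr 1
  · refine Finset.prod_congr rfl fun p hp => ?_
    rw [Real.rpow_def_of_pos (livePairs_pos hx hp), mul_comm]
  · refine Finset.prod_congr rfl fun i hi => ?_
    rw [Real.rpow_def_of_pos (abs_pos.2 (liveIdx_ne hx hi)), Real.log_abs, mul_comm]

lemma hasFDerivAt_fuseLog (σ : Fin n → ℝ) (J : Fin n) {x : Fin n → ℝ}
    (hx : x ∈ fusedChamber n J) : HasFDerivAt (fuseLog σ J) (fuseLogD σ J x) x := by
  unfold fuseLog fuseLogD
  refine HasFDerivAt.add (HasFDerivAt.fun_sum fun p hp => ?_) (HasFDerivAt.fun_sum fun i hi => ?_)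
  · exact ((hasFDerivAt_diff _ _ x).log (livePairs_pos hx hp).ne').const_mul _
  · exact ((hasFDerivAt_diff _ _ x).log (liveIdx_ne hx hi)).const_mul _

lemma hasFDerivAt_Ufuse (σ : Fin n → ℝ) (J : Fin n) (hj : J.val + 1 < n) {x : Fin n → ℝ}
    (hx : x ∈ fusedChamber n J) :
    HasFDerivAt (Ufuse σ J.val hj) (Ufuse σ J.val hj x • fuseLogD σ J x) x := by
  rw [Ufuse_eq_exp σ J hj hx]
  refine (hasFDerivAt_fuseLog σ J hx).exp.congr_of_eventuallyEq ?_
  filter_upwards [(isOpen_fusedChamber n J).mem_nhds hx] with y hy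
  exact Ufuse_eq_exp σ J hj hy

lemma hasFDerivAt_fusePow (σ : Fin n → ℝ) (J : Fin n) (m : ℕ) {x : Fin n → ℝ}
    (hx : x ∈ fusedChamber n J) :
    HasFDerivAt (fusePow σ J m) (∑ i ∈ liveIdx n J,
      (-(m * (σ i * σ J) * ((x i - x J)⁻¹) ^ (m + 1))) • diffCLM i J) x := by
  unfold fusePow
  refine HasFDerivAt.fun_sum fun i hi => ?_
  have hne := liveIdx_ne hx hi
  have h1 : HasDerivAt (fun t : ℝ => (σ i * σ J) * (t⁻¹) ^ m)
      (-(m * (σ i * σ J) * ((x i - x J)⁻¹) ^ (m + 1))) (x i - x J) := by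
    have := ((hasDerivAt_inv hne).fun_pow m).const_mul (σ i * σ J)
    refine this.congr_deriv ?_
    rcases m with _ | m
    · simp
    · rw [Nat.add_sub_cancel, ← inv_pow]; ring
  exact HasDerivAt.comp_hasFDerivAt (f := fun y : Fin n → ℝ => y i - y J) x h1
    (hasFDerivAt_diff i J x)

lemma liveIdx_ne_J {J i : Fin n} (hi : i ∈ liveIdx n J) : i ≠ J := by
  simp only [liveIdx, mem_filter, mem_univ, true_and] at hi
  exact fun h => hi.1 (congrArg Fin.val h)

lemma fuseLogD_J (σ : Fin n → ℝ) (J : Fin n) (x : Fin n → ℝ) :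
    fuseLogD σ J x (Pi.single J 1) = - fusePow σ J 1 x := by
  simp only [fuseLogD, fusePow, _root_.add_apply, _root_.sum_apply,
    _root_.smul_apply, diffCLM_single, smul_eq_mul]
  rw [Finset.sum_eq_zero, zero_add, ← Finset.sum_neg_distrib]
  · refine Finset.sum_congr rfl fun i hi => ?_
    simp [liveIdx_ne_J hi]
  · intro p hp
    simp only [livePairs, mem_filter, mem_univ, true_and] at hp
    have h1 : p.1 ≠ J := fun h => hp.2.1 (congrArg Fin.val h)
    have h2 : p.2 ≠ J := fun h => hp.2.2.2.1 (congrArg Fin.val h)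
    simp [h1, h2]

/-! ### Symmetrisation of the weighted gradient sums -/

/-- `∑ i, w i ∂_i Φ` for a weight `w` on the live indices: each pair of live indices contributes
through the difference quotient of `w`. -/
lemma sum_weight_fuseLogD (σ : Fin n → ℝ) (J : Fin n) (x w : Fin n → ℝ) :
    ∑ i ∈ liveIdx n J, w i * fuseLogD σ J x (Pi.single i 1) =
      ∑ p ∈ livePairs n J, (σ p.1 * σ p.2 / 2) * ((x p.2 - x p.1)⁻¹ * (w p.2 - w p.1)) +
        ∑ i ∈ liveIdx n J, (σ i * σ J) * ((x i - x J)⁻¹ * w i) := by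
  simp only [fuseLogD, _root_.add_apply, _root_.sum_apply,
    _root_.smul_apply, diffCLM_single, smul_eq_mul, mul_add, Finset.mul_sum,
    Finset.sum_add_distrib]
  congr 1
  · rw [Finset.sum_comm]
    refine Finset.sum_congr rfl fun p hp => ?_
    simp only [livePairs, mem_filter, mem_univ, true_and] at hp
    have h1 : p.1 ∈ liveIdx n J := by simp [liveIdx, hp.2.1, hp.2.2.1]
    have h2 : p.2 ∈ liveIdx n J := by simp [liveIdx, hp.2.2.2.1, hp.2.2.2.2]
    simp only [mul_sub, Finset.sum_sub_distrib, mul_ite, mul_one, mul_zero, Finset.sum_ite_eq,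
      h1, h2, if_true]
    ring
  · rw [Finset.sum_comm]
    refine Finset.sum_congr rfl fun i hi => ?_
    rw [Finset.sum_eq_single_of_mem i hi]
    · simp [(liveIdx_ne_J hi).symm]; ring
    · intro k hk hki
      simp [(liveIdx_ne_J hk).symm, hki.symm]

/-- For symmetric `g`, twice the sum over `i < k` is the full double sum minus the diagonal. -/
lemma two_mul_sum_livePairs (J : Fin n) (g : Fin n → Fin n → ℝ) (hg : ∀ i k, g i k = g k i) :
    2 * ∑ p ∈ livePairs n J, g p.1 p.2 =
      ∑ i ∈ liveIdx n J, ∑ k ∈ liveIdx n J, g i k - ∑ i ∈ liveIdx n J, g i i := by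
  have e1 : ∑ p ∈ livePairs n J, g p.1 p.2 =
      ∑ i ∈ liveIdx n J, ∑ k ∈ liveIdx n J, if i < k then g i k else 0 := by
    rw [← Finset.sum_product', ← Finset.sum_filter]
    refine Finset.sum_congr ?_ fun _ _ => rfl
    ext p
    simp only [livePairs, liveIdx, mem_filter, mem_univ, true_and, mem_product]
    tauto
  have e2 : ∑ p ∈ livePairs n J, g p.1 p.2 =
      ∑ i ∈ liveIdx n J, ∑ k ∈ liveIdx n J, if k < i then g i k else 0 := by
    rw [e1, Finset.sum_comm]
    simp only [hg]
  have e3 : ∑ i ∈ liveIdx n J, g i i =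
      ∑ i ∈ liveIdx n J, ∑ k ∈ liveIdx n J, if i = k then g i k else 0 := by
    refine Finset.sum_congr rfl fun i hi => ?_
    simp [hi]
  rw [two_mul]
  nth_rewrite 1 [e1]
  rw [e2, e3, ← Finset.sum_add_distrib, ← Finset.sum_sub_distrib]
  refine Finset.sum_congr rfl fun i _ => ?_
  rw [← Finset.sum_add_distrib, ← Finset.sum_sub_distrib]
  refine Finset.sum_congr rfl fun k _ => ?_
  rcases lt_trichotomy i k with h | h | h
  · simp [h, h.ne, h.le]
  · simp [h]
  · simp [h, h.ne', h.le]

lemma fuseGrad_one (σ : Fin n → ℝ) (hσ : ∀ i, σ i = 1 ∨ σ i = -1) (J : Fin n) {x : Fin n → ℝ}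
    (hx : x ∈ fusedChamber n J) :
    ∑ i ∈ liveIdx n J, (x i - x J)⁻¹ * fuseLogD σ J x (Pi.single i 1) =
      fusePow σ J 2 x - (fusePow σ J 1 x ^ 2 - ∑ i ∈ liveIdx n J, ((x i - x J)⁻¹) ^ 2) / 4 := by
  have hsq : ∀ i, σ i ^ 2 = 1 := fun i => by rcases hσ i with h | h <;> simp [h]
  rw [sum_weight_fuseLogD σ J x (fun i => (x i - x J)⁻¹)]
  have h := two_mul_sum_livePairs J (fun i k =>
    (σ i * σ J * (x i - x J)⁻¹) * (σ k * σ J * (x k - x J)⁻¹)) (fun i k => mul_comm _ _)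
  have hp : ∑ p ∈ livePairs n J, (σ p.1 * σ p.2 / 2) *
      ((x p.2 - x p.1)⁻¹ * ((x p.2 - x J)⁻¹ - (x p.1 - x J)⁻¹)) =
      -(1 / 2) * ∑ p ∈ livePairs n J,
        (σ p.1 * σ J * (x p.1 - x J)⁻¹) * (σ p.2 * σ J * (x p.2 - x J)⁻¹) := by
    rw [Finset.mul_sum]
    refine Finset.sum_congr rfl fun p hp => ?_
    have h0 := (livePairs_pos hx hp).ne'
    simp only [livePairs, mem_filter, mem_univ, true_and] at hp
    have h1 := liveIdx_ne hx (i := p.1) (by simp [liveIdx, hp.2.1, hp.2.2.1])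
    have h2 := liveIdx_ne hx (i := p.2) (by simp [liveIdx, hp.2.2.2.1, hp.2.2.2.2])
    have hJ := hsq J
    field_simp
    rw [hJ]; ring
  have hd : ∑ i ∈ liveIdx n J, (σ i * σ J * (x i - x J)⁻¹) * (σ i * σ J * (x i - x J)⁻¹) =
      ∑ i ∈ liveIdx n J, ((x i - x J)⁻¹) ^ 2 := by
    refine Finset.sum_congr rfl fun i _ => ?_
    linear_combination ((x i - x J)⁻¹) ^ 2 * (σ J ^ 2 * hsq i + hsq J)
  have hs : ∑ i ∈ liveIdx n J, σ i * σ J * ((x i - x J)⁻¹ * (x i - x J)⁻¹) = fusePow σ J 2 x := by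
    simp only [fusePow, pow_two]
  rw [hd, ← Finset.sum_mul_sum] at h
  rw [hp, hs]
  simp only [fusePow, pow_one] at h ⊢
  linear_combination (-1 / 4) * h

lemma fuseGrad_two (σ : Fin n → ℝ) (hσ : ∀ i, σ i = 1 ∨ σ i = -1) (J : Fin n) {x : Fin n → ℝ}
    (hx : x ∈ fusedChamber n J) :
    ∑ i ∈ liveIdx n J, ((x i - x J)⁻¹) ^ 2 * fuseLogD σ J x (Pi.single i 1) =
      fusePow σ J 3 x - (fusePow σ J 1 x * fusePow σ J 2 x -
        ∑ i ∈ liveIdx n J, ((x i - x J)⁻¹) ^ 3) / 2 := by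
  have hsq : ∀ i, σ i ^ 2 = 1 := fun i => by rcases hσ i with h | h <;> simp [h]
  rw [sum_weight_fuseLogD σ J x (fun i => ((x i - x J)⁻¹) ^ 2)]
  have h := two_mul_sum_livePairs J (fun i k =>
    (σ i * σ J * (x i - x J)⁻¹) * (σ k * σ J * (x k - x J)⁻¹ ^ 2) +
    (σ i * σ J * (x i - x J)⁻¹ ^ 2) * (σ k * σ J * (x k - x J)⁻¹)) (fun i k => by ring)
  have hp : ∑ p ∈ livePairs n J, (σ p.1 * σ p.2 / 2) *
      ((x p.2 - x p.1)⁻¹ * ((x p.2 - x J)⁻¹ ^ 2 - (x p.1 - x J)⁻¹ ^ 2)) =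
      -(1 / 2) * ∑ p ∈ livePairs n J,
        ((σ p.1 * σ J * (x p.1 - x J)⁻¹) * (σ p.2 * σ J * (x p.2 - x J)⁻¹ ^ 2) +
        (σ p.1 * σ J * (x p.1 - x J)⁻¹ ^ 2) * (σ p.2 * σ J * (x p.2 - x J)⁻¹)) := by
    rw [Finset.mul_sum]
    refine Finset.sum_congr rfl fun p hp => ?_
    have h0 := (livePairs_pos hx hp).ne'
    simp only [livePairs, mem_filter, mem_univ, true_and] at hp
    have h1 := liveIdx_ne hx (i := p.1) (by simp [liveIdx, hp.2.1, hp.2.2.1])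
    have h2 := liveIdx_ne hx (i := p.2) (by simp [liveIdx, hp.2.2.2.1, hp.2.2.2.2])
    have hJ := hsq J
    field_simp
    rw [hJ]; ring
  have hd : ∑ i ∈ liveIdx n J, ((σ i * σ J * (x i - x J)⁻¹) * (σ i * σ J * (x i - x J)⁻¹ ^ 2) +
      (σ i * σ J * (x i - x J)⁻¹ ^ 2) * (σ i * σ J * (x i - x J)⁻¹)) =
      2 * ∑ i ∈ liveIdx n J, ((x i - x J)⁻¹) ^ 3 := by
    rw [Finset.mul_sum]
    refine Finset.sum_congr rfl fun i _ => ?_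
    linear_combination 2 * ((x i - x J)⁻¹) ^ 3 * (σ J ^ 2 * hsq i + hsq J)
  have hs : ∑ i ∈ liveIdx n J, σ i * σ J * ((x i - x J)⁻¹ * (x i - x J)⁻¹ ^ 2) =
      fusePow σ J 3 x := by
    simp only [fusePow]
    exact Finset.sum_congr rfl fun i _ => by ring
  simp only [Finset.sum_add_distrib] at hd h
  rw [hd, ← Finset.sum_mul_sum, ← Finset.sum_mul_sum] at h
  rw [hp, hs]
  simp only [fusePow, pow_one, Finset.sum_add_distrib] at h ⊢
  linear_combination (-1 / 4) * h

/-! ### Iterated partial derivatives and the cancellation -/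

lemma fusePowD_J (σ : Fin n → ℝ) (J : Fin n) (m : ℕ) (x : Fin n → ℝ) :
    (∑ i ∈ liveIdx n J, (-(m * (σ i * σ J) * ((x i - x J)⁻¹) ^ (m + 1))) • diffCLM i J :
      (Fin n → ℝ) →L[ℝ] ℝ) (Pi.single J 1) = m * fusePow σ J (m + 1) x := by
  simp only [fusePow, _root_.sum_apply, _root_.smul_apply,
    diffCLM_single, smul_eq_mul, Finset.mul_sum]
  refine Finset.sum_congr rfl fun i hi => ?_
  simp [liveIdx_ne_J hi]; ring

lemma fusePowD_live (σ : Fin n → ℝ) (J : Fin n) (m : ℕ) (x : Fin n → ℝ) {k : Fin n}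
    (hk : k ∈ liveIdx n J) :
    (∑ i ∈ liveIdx n J, (-(m * (σ i * σ J) * ((x i - x J)⁻¹) ^ (m + 1))) • diffCLM i J :
      (Fin n → ℝ) →L[ℝ] ℝ) (Pi.single k 1) =
      -(m * (σ k * σ J) * ((x k - x J)⁻¹) ^ (m + 1)) := by
  simp only [_root_.sum_apply, _root_.smul_apply,
    diffCLM_single, smul_eq_mul]
  rw [Finset.sum_eq_single_of_mem k hk]
  · simp [(liveIdx_ne_J hk).symm]
  · intro i _ hik
    simp [(liveIdx_ne_J hk).symm, hik]

/-- `pd` only depends on the germ, so an identity on the open chamber may be differentiated. -/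
lemma pd_eq_of_hasFDerivAt {J : Fin n} {f g : (Fin n → ℝ) → ℝ} {g' : (Fin n → ℝ) →L[ℝ] ℝ}
    {x : Fin n → ℝ} (hx : x ∈ fusedChamber n J) (hfg : ∀ y ∈ fusedChamber n J, f y = g y)
    (hg : HasFDerivAt g g' x) (i : Fin n) : pd i f x = g' (Pi.single i 1) := by
  have : HasFDerivAt f g' x := hg.congr_of_eventuallyEq <| by
    filter_upwards [(isOpen_fusedChamber n J).mem_nhds hx] with y hy using hfg y hy
  rw [pd, this.fderiv]

/-- The PDE for an arbitrary `±1`-valued sequence: every derivative is `F` times a polynomial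
in the power sums, the `u i` and the `∂_i Φ`, and the symmetrised sums make the total vanish. -/
lemma Ufuse_pde_aux (σ : Fin n → ℝ) (hσ : ∀ i, σ i = 1 ∨ σ i = -1) (J : Fin n)
    (hj : J.val + 1 < n) {x : Fin n → ℝ} (hx : x ∈ fusedChamber n J) :
    pd J (pd J (pd J (Ufuse σ J.val hj))) x
        - 4 * ∑ i ∈ liveIdx n J,
            ((1 / 4) * pd J (Ufuse σ J.val hj) x / (x i - x J) ^ 2 -
              pd i (pd J (Ufuse σ J.val hj)) x / (x i - x J))
        + 2 * ∑ i ∈ liveIdx n J,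
            ((1 / 2) * Ufuse σ J.val hj x / (x i - x J) ^ 3 -
              pd i (Ufuse σ J.val hj) x / (x i - x J) ^ 2) = 0 := by
  set F := Ufuse σ J.val hj with hF
  have d0 : ∀ y ∈ fusedChamber n J, HasFDerivAt F (F y • fuseLogD σ J y) y :=
    fun y hy => hasFDerivAt_Ufuse σ J hj hy
  have p0 : ∀ i, pd i F x = F x * fuseLogD σ J x (Pi.single i 1) := fun i =>
    pd_eq_of_hasFDerivAt hx (fun _ _ => rfl) (d0 x hx) i
  have p1 : ∀ y ∈ fusedChamber n J, pd J F y = F y * (- fusePow σ J 1 y) := fun y hy => by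
    rw [pd_eq_of_hasFDerivAt hy (fun _ _ => rfl) (d0 y hy), ← fuseLogD_J]; rfl
  have q1 : ∀ y (_ : y ∈ fusedChamber n J) (i : Fin n), pd i (pd J F) y = _ := fun y hy i =>
    pd_eq_of_hasFDerivAt hy p1 ((d0 y hy).mul (hasFDerivAt_fusePow σ J 1 hy).neg) i
  have p2 : ∀ y ∈ fusedChamber n J, pd J (pd J F) y =
      F y * (fusePow σ J 1 y * fusePow σ J 1 y + -fusePow σ J 2 y) := fun y hy => by
    rw [q1 y hy J]
    have a := fusePowD_J σ J 1 y
    simp only [_root_.add_apply, _root_.smul_apply,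
      _root_.neg_apply, smul_eq_mul, a, fuseLogD_J]
    push_cast; ring
  have p1i : ∀ i ∈ liveIdx n J, pd i (pd J F) x =
      F x * (σ i * σ J * ((x i - x J)⁻¹) ^ 2
        - fusePow σ J 1 x * fuseLogD σ J x (Pi.single i 1)) := fun i hi => by
    rw [q1 x hx i]
    have a := fusePowD_live σ J 1 x hi
    simp only [_root_.add_apply, _root_.smul_apply,
      _root_.neg_apply, smul_eq_mul, a]
    push_cast; ring
  have p3 : pd J (pd J (pd J F)) x = F x * (-fusePow σ J 1 x ^ 3
      + 3 * fusePow σ J 1 x * fusePow σ J 2 x - 2 * fusePow σ J 3 x) := by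
    have b1 := hasFDerivAt_fusePow σ J 1 hx
    have b2 := hasFDerivAt_fusePow σ J 2 hx
    rw [pd_eq_of_hasFDerivAt hx p2 ((d0 x hx).mul ((b1.mul b1).add b2.neg))]
    have a1 := fusePowD_J σ J 1 x
    have a2 := fusePowD_J σ J 2 x
    simp only [_root_.add_apply, _root_.smul_apply,
      _root_.neg_apply, smul_eq_mul, a1, a2, fuseLogD_J]
    push_cast; ring
  have s1 : ∑ i ∈ liveIdx n J, ((1 / 4) * pd J F x / (x i - x J) ^ 2 -
        pd i (pd J F) x / (x i - x J)) =
      F x * (-(1 / 4) * fusePow σ J 1 x * ∑ i ∈ liveIdx n J, ((x i - x J)⁻¹) ^ 2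
        - fusePow σ J 3 x + fusePow σ J 1 x *
          ∑ i ∈ liveIdx n J, (x i - x J)⁻¹ * fuseLogD σ J x (Pi.single i 1)) := by
    rw [fusePow.eq_1 σ J 3, Finset.mul_sum, Finset.mul_sum, ← Finset.sum_sub_distrib,
      ← Finset.sum_add_distrib, Finset.mul_sum]
    refine Finset.sum_congr rfl fun i hi => ?_
    simp only [p1i i hi, p1 x hx, div_eq_mul_inv, ← inv_pow]
    ring
  have s2 : ∑ i ∈ liveIdx n J, ((1 / 2) * F x / (x i - x J) ^ 3 -
        pd i F x / (x i - x J) ^ 2) =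
      F x * ((1 / 2) * ∑ i ∈ liveIdx n J, ((x i - x J)⁻¹) ^ 3
        - ∑ i ∈ liveIdx n J, ((x i - x J)⁻¹) ^ 2 * fuseLogD σ J x (Pi.single i 1)) := by
    rw [Finset.mul_sum, ← Finset.sum_sub_distrib, Finset.mul_sum]
    refine Finset.sum_congr rfl fun i hi => ?_
    simp only [p0 i, div_eq_mul_inv, ← inv_pow]
    ring
  rw [s1, s2, p3, fuseGrad_one σ hσ J hx, fuseGrad_two σ hσ J hx]
  ring

end FusePDE

/-- `U_{σ/×_j}` satisfies the third-order PDE (κ = 4) in the fusion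
variable `ξ` (coordinate `j`; coordinate `j+1` is ignored). -/
theorem Ufuse_thirdOrderPDE (N : ℕ) (hN : 1 ≤ N)
    (σ : Fin (2 * N) → ℝ) (hσ : IsDyck σ)
    (j : ℕ) (hj : j + 1 < 2 * N)
    (hslope : σ ⟨j, by omega⟩ = σ ⟨j + 1, hj⟩) :
    ∀ x ∈ fusedChamber (2 * N) j,
      pd ⟨j, by omega⟩ (pd ⟨j, by omega⟩ (pd ⟨j, by omega⟩ (Ufuse σ j hj))) x
        - 4 * ∑ i ∈ univ.filter (fun i : Fin (2 * N) => i.val ≠ j ∧ i.val ≠ j + 1),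
            ((1 / 4) * pd ⟨j, by omega⟩ (Ufuse σ j hj) x / (x i - x ⟨j, by omega⟩) ^ 2 -
              pd i (pd ⟨j, by omega⟩ (Ufuse σ j hj)) x / (x i - x ⟨j, by omega⟩))
        + 2 * ∑ i ∈ univ.filter (fun i : Fin (2 * N) => i.val ≠ j ∧ i.val ≠ j + 1),
            ((1 / 2) * Ufuse σ j hj x / (x i - x ⟨j, by omega⟩) ^ 3 -
              pd i (Ufuse σ j hj) x / (x i - x ⟨j, by omega⟩) ^ 2) = 0 := by
  intro x hx
  exact Ufuse_pde_aux σ hσ.1 ⟨j, by omega⟩ hj hx
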